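/- arXiv:2502.00845 — 2 statements merged into one kernel-verified Lean document; each statement's English description precedes it below -/
import Mathlib

section
/- For every integer m > 1, there are infinitely many real quadratic number fields whose class number is divisible by m; that is, the set of squarefree integers d > 1 such that m divides the cardinality of the ideal class group Cl(ℚ(√d)) is infinite. -/
open NumberField

/-!
Let `α` be a root of `X ^ 2 - (A - B + 1) * X + A` with `A = a ^ m` and `B = b ^ m`, so that
`α * α' = A` and `(1 - α) * (1 - α') = B`. If `a` is coprime to `B - 1` and `b` to `A - 1`, the
ideals `(α)` and `(1 - α)` are `m`-th powers. If `m` does not divide the class number, then there is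
a prime `l ∣ m` such that every ideal whose `m`-th power is principal has a principal `m / l`-th
power, so that `α` and `α - 1` are `l`-th powers up to units. These units can be taken positive,
hence powers of a single unit, so that either `α` or some `α ^ i * (α - 1)` is an `l`-th power.
Modulo suitable degree one primes above `q ∣ a` and `r ∣ b` we have `α ≡ 1 - b ^ m` and `α ≡ a ^ m`,
so `1 - b ^ m` is an `l`-th power residue modulo `q` or `a ^ m - 1` is one modulo `r`. Dirichlet's
theorem and the Chinese remainder theorem provide `a` and `b` for which neither happens.

Infinitely many fields arise by applying this to arbitrarily large multiples of `m`, as a single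
class number has only finitely many divisors.
-/

/-- `x` is an `l`-th power residue modulo `q`; `0` counts as a residue when `l ≠ 0`. -/
def IsPowResidue (l q : ℕ) (x : ℤ) : Prop :=
  ∃ y : ZMod q, y ^ l = x

section GroupTheory

variable {G : Type*} [Group G]

lemma exists_pow_eq_pow_of_gcd_card_dvd {m k : ℕ} (h : m.gcd (Nat.card G) ∣ k) (w : G) :
    ∃ c : G, c ^ m = w ^ k := by
  obtain ⟨t, rfl⟩ := h
  refine ⟨w ^ (m.gcdA (Nat.card G) * t), ?_⟩
  have hgcd : ((m.gcd (Nat.card G) * t : ℕ) : ℤ) =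
      m.gcdA (Nat.card G) * t * m + Nat.card G * (m.gcdB (Nat.card G) * t) := by
    push_cast [Nat.gcd_eq_gcd_ab]
    ring
  rw [← zpow_natCast w, hgcd, zpow_add, zpow_mul _ (Nat.card G : ℤ), zpow_natCast w,
    pow_card_eq_one', one_zpow, mul_one, zpow_mul w _ m, zpow_natCast _ m]

lemma exists_prime_dvd_forall_pow_div_eq_one {m : ℕ} (h : ¬ m ∣ Nat.card G) :
    ∃ l : ℕ, l.Prime ∧ l ∣ m ∧ ∀ x : G, x ^ m = 1 → x ^ (m / l) = 1 := by
  obtain ⟨k, hk⟩ := Nat.gcd_dvd_left m (Nat.card G)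
  have hk1 : k ≠ 1 := by
    rintro rfl
    exact h (by rw [hk, mul_one]; exact Nat.gcd_dvd_right _ _)
  obtain ⟨l, hl, j, rfl⟩ := Nat.exists_prime_and_dvd hk1
  refine ⟨l, hl, ⟨_, hk.trans (mul_left_comm _ _ _)⟩, fun x hx => ?_⟩
  have hml : m / l = m.gcd (Nat.card G) * j := by
    rw [Nat.div_eq_iff_eq_mul_right hl.pos ⟨_, hk.trans (mul_left_comm _ _ _)⟩]
    exact hk.trans (mul_left_comm _ _ _)
  rw [hml, pow_mul, pow_gcd_eq_one.mpr ⟨hx, pow_card_eq_one'⟩, one_pow]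

end GroupTheory

section FiniteFields

variable {F : Type*} [Field F]

/-- The two candidates `w = 2` and `w = 1 / 2` give values whose product is `-(3 * ε / 2) ^ 2`. -/
lemma exists_not_isSquare_mul_one_sub_sq (hF : ¬ IsSquare (-1 : F)) (h3 : (3 : F) ≠ 0) {ε : F}
    (hε : ε ≠ 0) : ∃ w : Fˣ, ¬ IsSquare (ε * (1 - (w : F) ^ 2)) := by
  have h2 : (2 : F) ≠ 0 := fun h2 => hF ⟨1, by linear_combination -h2⟩
  by_contra! hsq
  have h4 : IsSquare (ε * (1 - 2 ^ 2)) := hsq (Units.mk0 2 h2)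
  have h4' : IsSquare (ε * (1 - 2⁻¹ ^ 2)) := by simpa using hsq (Units.mk0 2 h2)⁻¹
  have hneg : -1 = ε * (1 - 2 ^ 2) * (ε * (1 - 2⁻¹ ^ 2)) * (2 / (3 * ε)) ^ 2 := by
    field_simp
    norm_num
  exact hF (hneg ▸ (h4.mul h4').mul (IsSquare.sq _))

lemma exists_pow_eq_one_sub_pow {l : ℕ} (hl : Odd l) (hF : ∀ x : F, IsSquare x ∨ IsSquare (-x))
    (h : ∀ w : Fˣ, ∃ y : F, y ^ l = 1 - (w : F) ^ (2 * l)) {v : F} (hv : v ≠ 0)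
    (hvl : v ^ l ≠ -1) : ∃ y : F, y ^ l = 1 - v ^ l := by
  obtain ⟨w, hw⟩ | ⟨w, hw⟩ := hF v
  · have hw0 : w ≠ 0 := by rintro rfl; simp_all
    obtain ⟨y, hy⟩ := h (Units.mk0 w hw0)
    exact ⟨y, by rw [hy, hw, Units.val_mk0, pow_mul, sq]⟩
  · obtain rfl : v = -w ^ 2 := by linear_combination -hw
    have hw0 : w ≠ 0 := by simpa using hv
    rw [hl.neg_pow, neg_injective.ne_iff, ← pow_mul] at hvl
    obtain ⟨y, hy⟩ := h (Units.mk0 w hw0)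
    obtain ⟨z, hz⟩ := h (Units.mk0 (w ^ 2) (pow_ne_zero 2 hw0))
    refine ⟨z / y, ?_⟩
    rw [div_pow, hy, hz, Units.val_mk0, Units.val_mk0, div_eq_iff (sub_ne_zero.mpr hvl.symm),
      hl.neg_pow]
    ring

lemma exists_pow_eq_pow_add_pow_of_ne {l : ℕ} (hl : Odd l)
    (hF : ∀ x : F, IsSquare x ∨ IsSquare (-x))
    (h : ∀ w : Fˣ, ∃ y : F, y ^ l = 1 - (w : F) ^ (2 * l)) {u v : F} (huv : u ^ l ≠ v ^ l) :
    ∃ y : F, y ^ l = u ^ l + v ^ l := by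
  rcases eq_or_ne u 0 with rfl | hu
  · exact ⟨v, by rw [zero_pow hl.pos.ne', zero_add]⟩
  rcases eq_or_ne v 0 with rfl | hv
  · exact ⟨u, by rw [zero_pow hl.pos.ne', add_zero]⟩
  obtain ⟨y, hy⟩ := exists_pow_eq_one_sub_pow hl hF h (v := -(u / v))
    (neg_ne_zero.mpr (div_ne_zero hu hv)) (by
      rwa [hl.neg_pow, neg_injective.ne_iff, div_pow, ne_eq, div_eq_one_iff_eq (pow_ne_zero l hv)])
  refine ⟨y * v, ?_⟩
  rw [mul_pow, hy, hl.neg_pow, div_pow]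
  field_simp
  ring

lemma exists_pow_eq_pow_add_pow {l : ℕ} (hl : Odd l) (hF : ∀ x : F, IsSquare x ∨ IsSquare (-x))
    (h : ∀ w : Fˣ, ∃ y : F, y ^ l = 1 - (w : F) ^ (2 * l))
    (ht : ∃ t : Fˣ, (t : F) ^ (2 * l) ≠ 1) (u v : F) : ∃ y : F, y ^ l = u ^ l + v ^ l := by
  by_cases huv : u ^ l = v ^ l
  · suffices h2 : ∃ x : F, x ^ l = 2 by
      obtain ⟨x, hx⟩ := h2
      exact ⟨x * v, by rw [mul_pow, hx, huv, two_mul]⟩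
    by_cases h2 : (2 : F) = 0
    · exact ⟨0, by rw [h2, zero_pow hl.pos.ne']⟩
    obtain ⟨t, ht⟩ := ht
    -- `2 = (1 + t ^ l) + (1 - t ^ l)` is a sum of two distinct `l`-th powers.
    rw [mul_comm, pow_mul, Ne, sq_eq_one_iff, not_or] at ht
    obtain ⟨y, hy⟩ : ∃ y : F, y ^ l = 1 ^ l + (t : F) ^ l :=
      exists_pow_eq_pow_add_pow_of_ne hl hF h (by rw [one_pow]; exact Ne.symm ht.1)
    obtain ⟨z, hz⟩ : ∃ z : F, z ^ l = 1 ^ l + (-t : F) ^ l :=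
      exists_pow_eq_pow_add_pow_of_ne hl hF h (by
        rw [one_pow, hl.neg_pow]; exact fun h => ht.2 (by rw [h, neg_neg]))
    have hyz : y ^ l ≠ z ^ l := fun hyz => mul_ne_zero h2 (pow_ne_zero l t.ne_zero) (by
      rw [hy, hz, hl.neg_pow] at hyz
      linear_combination hyz)
    obtain ⟨x, hx⟩ := exists_pow_eq_pow_add_pow_of_ne hl hF h hyz
    exact ⟨x, by rw [hx, hy, hz, hl.neg_pow]; ring⟩
  · exact exists_pow_eq_pow_add_pow_of_ne hl hF h huv

variable [Finite F]

lemma isSquare_or_isSquare_neg_of_not_isSquare_neg_one (hF : ¬ IsSquare (-1 : F)) (x : F) :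
    IsSquare x ∨ IsSquare (-x) := by
  classical
  have := Fintype.ofFinite F
  by_contra! hx
  have hmul : quadraticChar F (-x) = quadraticChar F (-1) * quadraticChar F x := by
    rw [← map_mul, neg_one_mul]
  simp [quadraticChar_neg_one_iff_not_isSquare.mpr, hF, hx] at hmul

lemma not_surjective_pow_of_dvd_card_units {l : ℕ} (hl : l.Prime) (h : l ∣ Nat.card Fˣ) :
    ¬ Function.Surjective fun x : F => x ^ l := by
  intro hsurj
  have := Fact.mk hl
  obtain ⟨u, hu⟩ := exists_prime_orderOf_dvd_card' l h
  have hu1 : (u : F) = 1 := Finite.injective_iff_surjective.mpr hsurj (by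
    simp only [← Units.val_pow_eq_pow_val, ← hu, pow_orderOf_eq_one, Units.val_one, one_pow])
  rw [Units.val_eq_one.mp hu1, orderOf_one] at hu
  exact hl.ne_one hu.symm

lemma exists_units_pow_ne_one {n : ℕ} (hn : n ≠ 0) (h : n < Nat.card Fˣ) :
    ∃ t : Fˣ, (t : F) ^ n ≠ 1 := by
  by_contra! ht
  have hexp := Monoid.exponent_dvd_of_forall_pow_eq_one fun t : Fˣ =>
    Units.ext (by simpa using ht t)
  rw [IsCyclic.exponent_eq_card] at hexp
  exact h.not_ge (Nat.le_of_dvd (Nat.pos_of_ne_zero hn) hexp)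

end FiniteFields

section AuxiliaryPrimes

variable {q : ℕ} [Fact q.Prime]

lemma surjective_pow_of_forall_exists_pow_eq_pow_add_pow {l : ℕ} (hl : l ≠ 0)
    (h : ∀ u v : ZMod q, ∃ y : ZMod q, y ^ l = u ^ l + v ^ l) :
    Function.Surjective fun x : ZMod q => x ^ l := by
  intro x
  obtain ⟨n, rfl⟩ := ZMod.natCast_zmod_surjective x
  induction n with
  | zero => exact ⟨0, by simp [hl]⟩
  | succ n ih =>
    obtain ⟨u, hu⟩ := ih
    obtain ⟨y, hy⟩ := h u 1
    exact ⟨y, by simp only at hu ⊢; rw [hy, hu, one_pow, Nat.cast_succ]⟩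

lemma not_isSquare_neg_one_zmod (hq : q % 4 = 3) : ¬ IsSquare (-1 : ZMod q) := fun h =>
  ZMod.mod_four_ne_three_of_sq_eq_neg_one (y := h.choose) (by rw [sq]; exact h.choose_spec.symm) hq

lemma card_units_zmod : Nat.card (ZMod q)ˣ = q - 1 := by
  rw [Nat.card_eq_fintype_card, ZMod.card_units]

lemma exists_not_isPowResidue_of_gcd_dvd {l m k : ℕ} {ε : ℤ} (hm : m.gcd (q - 1) ∣ k)
    (h : ∃ w : (ZMod q)ˣ, ¬ ∃ y : ZMod q, y ^ l = ε * (1 - (w : ZMod q) ^ k)) :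
    ∃ c : ℤ, ¬ (q : ℤ) ∣ c ∧ ¬ IsPowResidue l q (ε * (1 - c ^ m)) := by
  obtain ⟨w, hw⟩ := h
  rw [← card_units_zmod] at hm
  obtain ⟨u, hu⟩ := exists_pow_eq_pow_of_gcd_card_dvd hm w
  obtain ⟨c, hc⟩ := ZMod.intCast_surjective (u : ZMod q)
  refine ⟨c, fun hqc => ?_, ?_⟩
  · rw [← ZMod.intCast_zmod_eq_zero_iff_dvd, hc] at hqc
    exact u.ne_zero hqc
  · rw [IsPowResidue]
    push_cast
    rwa [hc, ← Units.val_pow_eq_pow_val, hu, Units.val_pow_eq_pow_val]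

lemma exists_not_isPowResidue_two {m : ℕ} {ε : ℤ} (hε : IsUnit ε) (hq : q % 4 = 3) (hq3 : 3 < q)
    (hm : m.gcd (q - 1) ∣ 2) : ∃ c : ℤ, ¬ (q : ℤ) ∣ c ∧ ¬ IsPowResidue 2 q (ε * (1 - c ^ m)) := by
  have h3 : (3 : ZMod q) ≠ 0 := fun h => by
    rw [← Nat.cast_ofNat, ZMod.natCast_eq_zero_iff] at h
    exact hq3.not_ge (Nat.le_of_dvd three_pos h)
  obtain ⟨w, hw⟩ := exists_not_isSquare_mul_one_sub_sq (not_isSquare_neg_one_zmod hq) h3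
    (hε.map (Int.castRingHom (ZMod q))).ne_zero
  refine exists_not_isPowResidue_of_gcd_dvd hm ⟨w, fun ⟨y, hy⟩ => hw ⟨y, ?_⟩⟩
  rw [← sq, hy, eq_intCast]

lemma exists_not_isPowResidue_of_odd {l m : ℕ} {ε : ℤ} (hε : IsUnit ε) (hl : l.Prime)
    (hodd : Odd l) (hq : q % 4 = 3) (hlq : l ∣ q - 1) (hlq' : 2 * l < q - 1)
    (hm : m.gcd (q - 1) ∣ 2 * l) :
    ∃ c : ℤ, ¬ (q : ℤ) ∣ c ∧ ¬ IsPowResidue l q (ε * (1 - c ^ m)) := by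
  refine exists_not_isPowResidue_of_gcd_dvd hm ?_
  by_contra! h
  refine not_surjective_pow_of_dvd_card_units (F := ZMod q) hl (by rwa [card_units_zmod]) ?_
  refine surjective_pow_of_forall_exists_pow_eq_pow_add_pow hl.ne_zero ?_
  refine exists_pow_eq_pow_add_pow hodd
    (isSquare_or_isSquare_neg_of_not_isSquare_neg_one (not_isSquare_neg_one_zmod hq)) (fun w => ?_)
    (exists_units_pow_ne_one (mul_ne_zero two_ne_zero hl.ne_zero) (by rwa [card_units_zmod]))
  obtain ⟨y, hy⟩ := h w
  obtain rfl | rfl := Int.isUnit_iff.mp hε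
  · exact ⟨y, by simpa using hy⟩
  · exact ⟨-y, by simp [hodd.neg_pow, hy]⟩

end AuxiliaryPrimes

section Dirichlet

lemma exists_gt_modEq_modEq {x y : ℤ} (hxy : IsCoprime x y) (hx : x ≠ 0) (hy : y ≠ 0)
    (u v N : ℤ) : ∃ z > N, z ≡ u [ZMOD x] ∧ z ≡ v [ZMOD y] := by
  obtain ⟨s, t, hst⟩ := hxy
  have hpos : 0 < (x * y) ^ 2 := by positivity
  set z := v * (s * x) + u * (t * y) with hz
  refine ⟨z + (x * y) ^ 2 * (|z| + |N| + 1), ?_, ?_, ?_⟩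
  · nlinarith [neg_abs_le z, le_abs_self N, abs_nonneg z, abs_nonneg N]
  · refine (Int.modEq_iff_dvd.mpr ⟨(u - v) * s - x * y ^ 2 * (|z| + |N| + 1), ?_⟩)
    rw [hz]
    linear_combination -u * hst
  · refine (Int.modEq_iff_dvd.mpr ⟨(v - u) * t - x ^ 2 * y * (|z| + |N| + 1), ?_⟩)
    rw [hz]
    linear_combination -v * hst

lemma isCoprime_of_modEq {x y n : ℤ} (h : x ≡ y [ZMOD n]) (hy : IsCoprime y n) :
    IsCoprime x n := by
  obtain ⟨k, hk⟩ := h.symm.dvd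
  rw [eq_add_of_sub_eq' hk]
  exact hy.add_mul_left_left k

lemma gcd_sub_one_dvd_two {n q : ℕ} (h : n ∣ q + 1) : n.gcd (q - 1) ∣ 2 := by
  rcases q.eq_zero_or_pos with rfl | hq
  · exact ((Nat.gcd_dvd_left _ _).trans h).trans (one_dvd 2)
  · have := Nat.dvd_sub ((Nat.gcd_dvd_left n (q - 1)).trans h) (Nat.gcd_dvd_right n (q - 1))
    rwa [show q + 1 - (q - 1) = 2 by omega] at this

lemma exists_prime_gt_modEq_modEq {x y : ℕ} (hxy : x.Coprime y) (hx : x ≠ 0) (hy : y ≠ 0) {u v : ℤ}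
    (hu : IsCoprime u x) (hv : IsCoprime v y) (N : ℕ) :
    ∃ q > N, q.Prime ∧ q ≡ u [ZMOD x] ∧ q ≡ v [ZMOD y] := by
  obtain ⟨k, -, hku, hkv⟩ := exists_gt_modEq_modEq (Nat.isCoprime_iff_coprime.mpr hxy)
    (Nat.cast_ne_zero.mpr hx) (Nat.cast_ne_zero.mpr hy) u v 0
  have hk : IsCoprime k ((x * y : ℕ) : ℤ) := by
    rw [Nat.cast_mul]
    exact (isCoprime_of_modEq hku hu).mul_right (isCoprime_of_modEq hkv hv)
  obtain ⟨q, hqN, hq, hqk⟩ := Nat.forall_exists_prime_gt_and_zmodEq N (mul_ne_zero hx hy) hk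
  rw [Nat.cast_mul] at hqk
  exact ⟨q, hqN, hq, (hqk.of_dvd (dvd_mul_right _ _)).trans hku,
    (hqk.of_dvd (dvd_mul_left _ _)).trans hkv⟩

lemma exists_prime_gt_dvd_add_one {m : ℕ} (hm : m ≠ 0) (N : ℕ) :
    ∃ q > N, q.Prime ∧ m ∣ q + 1 := by
  obtain ⟨q, hqN, hq, hqm⟩ := Nat.forall_exists_prime_gt_and_zmodEq N hm
    (a := -1) isCoprime_one_left.neg_left
  refine ⟨q, hqN, hq, ?_⟩
  zify
  simpa using hqm.symm.dvd

lemma exists_prime_gt_gcd_dvd {l m : ℕ} (hl : l.Prime) (hodd : Odd l) (hm : m ≠ 0) (N : ℕ) :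
    ∃ q > N, q.Prime ∧ q % 4 = 3 ∧ l ∣ q - 1 ∧ m.gcd (q - 1) ∣ 2 * l := by
  obtain ⟨e, n, hn, rfl⟩ := Nat.exists_eq_pow_mul_and_not_dvd hm l hl.ne_one
  have hcop : (l ^ (e + 1)).Coprime (4 * n) :=
    ((Nat.Coprime.pow_right 2 (Nat.coprime_two_right.mpr hodd)).mul_right
      (hl.coprime_iff_not_dvd.mpr hn)).pow_left _
  have hl1 : IsCoprime (1 + l : ℤ) ((l ^ (e + 1) : ℕ) : ℤ) := by
    rw [Nat.cast_pow]
    exact IsCoprime.pow_right ⟨1, -1, by ring⟩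
  -- `q ≡ 1 + l` modulo `l ^ (e + 1)` forces `l` to divide `q - 1` exactly once.
  obtain ⟨q, hqN, hq, hql, hqn⟩ := exists_prime_gt_modEq_modEq hcop (pow_ne_zero _ hl.ne_zero)
    (mul_ne_zero four_ne_zero (right_ne_zero_of_mul hm)) hl1 isCoprime_one_left.neg_left N
  replace hqn : 4 * n ∣ q + 1 := by
    zify
    simpa using hqn.symm.dvd
  replace hql : q - 1 ≡ l [MOD l ^ (e + 1)] := by
    rw [← Int.natCast_modEq_iff, Nat.cast_pred hq.pos]
    simpa using hql.sub_right 1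
  have h4 : 4 ∣ q + 1 := (dvd_mul_right 4 n).trans hqn
  have hgl : (l ^ e).gcd (q - 1) ∣ l := by
    rw [Nat.gcd_comm, (hql.of_dvd (pow_dvd_pow l e.le_succ)).gcd_eq]
    exact Nat.gcd_dvd_left _ _
  refine ⟨q, hqN, hq, by omega, (hql.dvd_iff (dvd_pow_self l e.succ_ne_zero)).mpr dvd_rfl, ?_⟩
  rw [mul_comm 2 l]
  exact (Nat.gcd_mul_left_dvd_mul_gcd _ _ _).trans
    (mul_dvd_mul hgl (gcd_sub_one_dvd_two ((dvd_mul_left n 4).trans hqn)))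

lemma exists_prime_gt_not_isPowResidue {l m : ℕ} {ε : ℤ} (hl : l.Prime) (hm : m ≠ 0)
    (hε : IsUnit ε) (N : ℕ) : ∃ q > N, q.Prime ∧
      ∃ c : ℤ, ¬ (q : ℤ) ∣ c ∧ ¬ IsPowResidue l q (ε * (1 - c ^ m)) := by
  rcases hl.eq_two_or_odd' with rfl | hodd
  · obtain ⟨q, hqN, hq, hmq⟩ := exists_prime_gt_dvd_add_one (m := 4 * m) (by positivity) (N + 3)
    have := Fact.mk hq
    have h4 : 4 ∣ q + 1 := (dvd_mul_right 4 m).trans hmq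
    exact ⟨q, by omega, hq, exists_not_isPowResidue_two hε (by omega) (by omega)
      (gcd_sub_one_dvd_two ((dvd_mul_left m 4).trans hmq))⟩
  · obtain ⟨q, hqN, hq, hq4, hlq, hmq⟩ := exists_prime_gt_gcd_dvd hl hodd hm (N + 2 * l + 1)
    have := Fact.mk hq
    exact ⟨q, by omega, hq, exists_not_isPowResidue_of_odd hε hl hodd hq4 hlq (by omega) hmq⟩

end Dirichlet

section Gluing

lemma IsPowResidue.congr {l q : ℕ} {x y : ℤ} (hx : IsPowResidue l q x) (h : x ≡ y [ZMOD q]) :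
    IsPowResidue l q y := by
  rwa [IsPowResidue, ← (ZMod.intCast_eq_intCast_iff x y q).mpr h]

lemma not_dvd_of_not_isPowResidue {l q : ℕ} {x : ℤ} (hl : l ≠ 0) (h : ¬ IsPowResidue l q x) :
    ¬ (q : ℤ) ∣ x := fun hqx =>
  h ⟨0, by rw [zero_pow hl, (ZMod.intCast_zmod_eq_zero_iff_dvd x q).mpr hqx]⟩

open Filter in
lemma exists_injective_not_isPowResidue {m : ℕ} {ε : ℤ} (hm : m ≠ 0) (hε : IsUnit ε) (N : ℕ) :
    ∃ q : ℕ → ℕ, q.Injective ∧ ∀ l : ℕ, l.Prime → N < q l ∧ (q l).Prime ∧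
      ∃ c : ℤ, ¬ (q l : ℤ) ∣ c ∧ ¬ IsPowResidue l (q l) (ε * (1 - c ^ m)) := by
  suffices h : ∀ l : ℕ, ∃ᶠ q in atTop, l.Prime → N < q ∧ q.Prime ∧
      ∃ c : ℤ, ¬ (q : ℤ) ∣ c ∧ ¬ IsPowResidue l q (ε * (1 - c ^ m)) by
    obtain ⟨q, hmono, hq⟩ := extraction_forall_of_frequently h
    exact ⟨q, hmono.injective, hq⟩
  refine fun l => frequently_atTop'.mpr fun M => ?_
  by_cases hl : l.Prime
  · obtain ⟨q, hq, h⟩ := exists_prime_gt_not_isPowResidue hl hm hε (max M N)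
    exact ⟨q, by omega, fun _ => ⟨by omega, h⟩⟩
  · exact ⟨M + 1, M.lt_succ_self, fun h => absurd h hl⟩

lemma exists_forall_modEq {s : Finset ℕ} {q : ℕ → ℕ} (hinj : q.Injective)
    (hq : ∀ l ∈ s, (q l).Prime) (f : ℕ → ℤ) : ∃ c : ℤ, ∀ l ∈ s, c ≡ f l [ZMOD q l] := by
  have hcop : Pairwise (Function.onFun IsCoprime fun l : s => Ideal.span {(q l : ℤ)}) := by
    intro l l' hne
    rw [Function.onFun, Ideal.isCoprime_span_singleton_iff, Nat.isCoprime_iff_coprime,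
      Nat.coprime_primes (hq l l.2) (hq l' l'.2)]
    exact hinj.ne (Subtype.coe_injective.ne hne)
  obtain ⟨c, hc⟩ := Ideal.exists_forall_sub_mem_ideal hcop fun l => f l
  exact ⟨c, fun l hl => (Int.modEq_iff_dvd.mpr (Ideal.mem_span_singleton.mp (hc ⟨l, hl⟩))).symm⟩

lemma exists_modulus_not_isPowResidue {m : ℕ} {ε : ℤ} (hm : m ≠ 0) (hε : IsUnit ε) (N : ℕ) :
    ∃ Q c : ℤ, 0 < Q ∧ (∀ p : ℕ, p.Prime → (p : ℤ) ∣ Q → N < p) ∧ IsCoprime Q c ∧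
      IsCoprime Q (c ^ m - 1) ∧ ∀ l : ℕ, l.Prime → l ∣ m → ∃ q : ℕ, q.Prime ∧ (q : ℤ) ∣ Q ∧
        ¬ IsPowResidue l q (ε * (1 - c ^ m)) := by
  obtain ⟨q, hinj, hq⟩ := exists_injective_not_isPowResidue hm hε N
  replace hq l (hl : l ∈ m.primeFactors) := hq l (Nat.prime_of_mem_primeFactors hl)
  choose! hqN hqp f hqf hf using hq
  have hprime l (hl : l ∈ m.primeFactors) : Prime (q l : ℤ) :=
    Nat.prime_iff_prime_int.mp (hqp l hl)
  obtain ⟨c, hc⟩ := exists_forall_modEq hinj hqp f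
  have hres l (hl : l ∈ m.primeFactors) : ¬ IsPowResidue l (q l) (ε * (1 - c ^ m)) := fun h =>
    hf l hl (h.congr ((((hc l hl).pow m).sub_left 1).mul_left ε))
  refine ⟨∏ l ∈ m.primeFactors, (q l : ℤ), c, ?_, ?_, ?_, ?_, ?_⟩
  · exact Finset.prod_pos fun l hl => Nat.cast_pos.mpr (hqp l hl).pos
  · intro p hp hpQ
    obtain ⟨l, hl, hpl⟩ := (Nat.prime_iff_prime_int.mp hp).exists_mem_finset_dvd hpQ
    rw [(Nat.prime_dvd_prime_iff_eq hp (hqp l hl)).mp (Int.natCast_dvd_natCast.mp hpl)]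
    exact hqN l hl
  · refine IsCoprime.prod_left fun l hl => (hprime l hl).coprime_iff_not_dvd.mpr fun h => ?_
    exact hqf l hl ((hc l hl).dvd_iff.mp h)
  · refine IsCoprime.prod_left fun l hl => (hprime l hl).coprime_iff_not_dvd.mpr fun h => ?_
    refine not_dvd_of_not_isPowResidue (Nat.prime_of_mem_primeFactors hl).ne_zero (hres l hl) ?_
    exact (dvd_sub_comm.mp h).mul_left ε
  · intro l hl hlm
    have hl' : l ∈ m.primeFactors := Nat.mem_primeFactors.mpr ⟨hl, hlm, hm⟩
    exact ⟨q l, hqp l hl', Finset.dvd_prod_of_mem (fun l => (q l : ℤ)) hl', hres l hl'⟩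

/-- A pair `(a, b)` for which the roots of `X ^ 2 - (a ^ m - b ^ m + 1) * X + a ^ m` generate a
real quadratic field with class number divisible by `m`: the inequalities make the discriminant
positive and not a square, the coprimality conditions make two ideals `m`-th powers, and the residue
conditions keep their generators from being `l`-th powers. -/
structure IsAdmissible (m : ℕ) (a b : ℤ) : Prop where
  pos : 0 < b
  lt : 3 * b ^ m + 1 < a ^ m
  isCoprime_left : IsCoprime a (b ^ m - 1)
  isCoprime_right : IsCoprime b (a ^ m - 1)
  exists_left : ∀ l : ℕ, l.Prime → l ∣ m → ∃ q : ℕ, q.Prime ∧ (q : ℤ) ∣ a ∧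
    ¬ IsPowResidue l q (1 - b ^ m)
  exists_right : ∀ l : ℕ, l.Prime → l ∣ m → ∃ r : ℕ, r.Prime ∧ (r : ℤ) ∣ b ∧ ¬ (r : ℤ) ∣ a ∧
    ¬ IsPowResidue l r (a ^ m - 1)

lemma isCoprime_pow_sub_one {m : ℕ} (hm : m ≠ 0) (x : ℤ) : IsCoprime x (x ^ m - 1) :=
  (IsCoprime.pow_left_iff (Nat.pos_of_ne_zero hm)).mp ⟨1, -1, by ring⟩

lemma exists_gt_one_mul_modEq {Q R : ℤ} (hQR : IsCoprime Q R) (hQ : Q ≠ 0) (hR : R ≠ 0) (c : ℤ) :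
    ∃ x > 1, x ≡ 1 [ZMOD R] ∧ R * x ≡ c [ZMOD Q] := by
  obtain ⟨s, t, hst⟩ := id hQR
  obtain ⟨x, hx, hxR, hxQ⟩ := exists_gt_modEq_modEq hQR.symm hR hQ 1 (t * c) 1
  refine ⟨x, hx, hxR, (hxQ.mul_left R).trans (Int.modEq_iff_dvd.mpr ⟨s * c, ?_⟩)⟩
  linear_combination -c * hst

theorem exists_isAdmissible {m : ℕ} (hm : m ≠ 0) : ∃ a b : ℤ, IsAdmissible m a b := by
  obtain ⟨Q, c, hQ, -, -, hQc, hleft⟩ := exists_modulus_not_isPowResidue hm isUnit_one 0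
  obtain ⟨R, d, hR, hRQ, hRd, hRd', hright⟩ :=
    exists_modulus_not_isPowResidue hm isUnit_one.neg Q.natAbs
  have hQR : IsCoprime Q R := Int.isCoprime_iff_gcd_eq_one.mpr <|
    Nat.coprime_of_dvd fun p hp hpQ hpR => (hRQ p hp (Int.natCast_dvd.mpr hpR)).not_ge
      (Nat.le_of_dvd (Int.natAbs_pos.mpr hQ.ne') hpQ)
  obtain ⟨x, hx, hxR, hxQ⟩ := exists_gt_one_mul_modEq hQR hQ.ne' hR.ne' c
  have hRx : IsCoprime R x := (isCoprime_of_modEq hxR isCoprime_one_left).symm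
  have hb1 : 1 < (R * x) ^ m := one_lt_pow₀ (by nlinarith) hm
  have hb : IsCoprime (R * x * Q) ((R * x) ^ m - 1) := (isCoprime_pow_sub_one hm _).mul_left
    (isCoprime_of_modEq ((hxQ.pow m).sub_right 1) hQc.symm).symm
  obtain ⟨e, -, heR, heQ⟩ := exists_gt_modEq_modEq (hQR.symm.mul_right hRx) hR.ne'
    (by positivity) d 0 0
  obtain ⟨a, ha, hae, ha1⟩ := exists_gt_modEq_modEq hb
    (by positivity) (by linarith) e 1 (3 * (R * x) ^ m + 1)
  have haR : a ≡ d [ZMOD R] := (hae.of_dvd ⟨x * Q, by ring⟩).trans heR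
  have haQ : Q * x ∣ a := Int.modEq_zero_iff_dvd.mp ((hae.of_dvd ⟨R, by ring⟩).trans heQ)
  refine ⟨a, R * x, by positivity, ha.trans_le (le_self_pow₀ (by linarith) hm),
    isCoprime_of_modEq ha1 isCoprime_one_left, ?_, fun l hl hlm => ?_, fun l hl hlm => ?_⟩
  · exact (isCoprime_of_modEq ((haR.pow m).sub_right 1) hRd'.symm).symm.mul_left
      ((isCoprime_pow_sub_one hm a).of_isCoprime_of_dvd_left (dvd_of_mul_left_dvd haQ))
  · obtain ⟨q, hq, hqQ, hres⟩ := hleft l hl hlm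
    refine ⟨q, hq, hqQ.trans (dvd_of_mul_right_dvd haQ), fun h => hres ?_⟩
    rw [one_mul]
    exact h.congr (((hxQ.pow m).sub_left 1).of_dvd hqQ)
  · obtain ⟨r, hr, hrR, hres⟩ := hright l hl hlm
    refine ⟨r, hr, hrR.mul_right x, fun hra => ?_, fun h => hres ?_⟩
    · exact (Nat.prime_iff_prime_int.mp hr).not_isUnit
        (hRd.isUnit_of_dvd' hrR (((haR.of_dvd hrR).dvd_iff).mp hra))
    · rw [neg_one_mul, neg_sub]
      exact h.congr (((haR.pow m).sub_right 1).of_dvd hrR)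

end Gluing

section Dedekind

variable {R : Type*} [CommRing R] [IsDedekindDomain R]

lemma exists_associated_pow_of_forall_classGroup {l m : ℕ} (hm : m ≠ 0) (hl : l ∣ m)
    (hcl : ∀ x : ClassGroup R, x ^ m = 1 → x ^ (m / l) = 1) {α β c : R} (hα : α ≠ 0)
    (hαβ : α * β = c ^ m) (hcop : IsCoprime α β) : ∃ γ : R, Associated (γ ^ l) α := by
  obtain ⟨I, hI⟩ : ∃ I : Ideal R, Ideal.span {α} = I ^ m :=
    exists_eq_pow_of_mul_eq_pow_of_coprime
      ((Ideal.isCoprime_span_singleton_iff α β).mpr hcop)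
      (by rw [Ideal.span_singleton_mul_span_singleton, hαβ, Ideal.span_singleton_pow])
  have hI0 : I ≠ 0 := by
    rintro rfl
    exact hα (by simpa [Ideal.bot_pow hm] using hI)
  have mk0_pow_eq_one_iff (n : ℕ) :
      ClassGroup.mk0 ⟨I, mem_nonZeroDivisors_of_ne_zero hI0⟩ ^ n = 1 ↔ (I ^ n).IsPrincipal := by
    rw [← map_pow]
    exact ClassGroup.mk0_eq_one_iff (pow_mem (mem_nonZeroDivisors_of_ne_zero hI0) n)
  obtain ⟨γ, hγ⟩ := (mk0_pow_eq_one_iff _).mp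
    (hcl _ ((mk0_pow_eq_one_iff m).mpr (hI ▸ ⟨α, rfl⟩)))
  refine ⟨γ, Ideal.span_singleton_eq_span_singleton.mp ?_⟩
  rw [← Ideal.span_singleton_pow, Ideal.span, ← hγ, ← pow_mul, Nat.div_mul_cancel hl, hI]

end Dedekind

section Units

lemma dvd_or_exists_dvd_mul_add {l : ℕ} (hl : l.Prime) (s t : ℤ) :
    (l : ℤ) ∣ s ∨ ∃ i : ℕ, (l : ℤ) ∣ s * i + t := by
  have := Fact.mk hl
  refine or_iff_not_imp_left.mpr fun hs => ⟨(-t / s : ZMod l).val, ?_⟩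
  rw [← ZMod.intCast_zmod_eq_zero_iff_dvd] at hs ⊢
  push_cast
  rw [ZMod.natCast_zmod_val, mul_div_cancel₀ _ hs, neg_add_cancel]

lemma exists_eq_pow_mul_unit_of_pos {R : Type*} [CommRing R] (φ : R →+* ℝ) {l : ℕ} {x : R}
    (hx : 0 < φ x) (h : ∃ γ : R, Associated (γ ^ l) x) :
    ∃ (γ : R) (u : Rˣ), x = γ ^ l * u ∧ 0 < φ u := by
  obtain ⟨γ, u, rfl⟩ := h
  rw [map_mul, map_pow] at hx
  rcases l.even_or_odd with hl | hl
  · exact ⟨γ, u, rfl, pos_of_mul_pos_right hx (hl.pow_nonneg _)⟩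
  rcases le_or_gt 0 (φ γ) with hγ | hγ
  · exact ⟨γ, u, rfl, pos_of_mul_pos_right hx (pow_nonneg hγ l)⟩
  · refine ⟨-γ, -u, by rw [hl.neg_pow, Units.val_neg, neg_mul_neg], ?_⟩
    rw [Units.val_neg, map_neg]
    exact neg_pos.mpr (neg_of_mul_pos_right hx (hl.pow_neg hγ).le)

variable {K : Type*} [Field K] [NumberField K]

open Units in
/-- Positive units meet the torsion trivially, so they embed in `(𝓞 K)ˣ ⧸ torsion K`, which is
infinite cyclic or trivial. -/
lemma exists_forall_pos_mem_zpowers (φ : K →+* ℝ) (hK : rank K ≤ 1) :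
    ∃ η : (𝓞 K)ˣ, ∀ u : (𝓞 K)ˣ, 0 < φ (u : K) → u ∈ Subgroup.zpowers η := by
  obtain ⟨v, hv⟩ := finrank_le_one_iff.mp ((finrank_modTorsion K).trans_le hK)
  have : IsCyclic ((𝓞 K)ˣ ⧸ torsion K) := ⟨v.toMul, hv⟩
  let P : Subgroup (𝓞 K)ˣ := (Units.posSubgroup ℝ).comap
    (Units.map (φ.comp (algebraMap (𝓞 K) K)))
  have hinj : Function.Injective ((QuotientGroup.mk' (torsion K)).comp P.subtype) := by
    refine (injective_iff_map_eq_one _).mpr fun u hu => Subtype.ext (Units.ext ?_)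
    obtain ⟨n, hn, hun⟩ := isOfFinOrder_iff_pow_eq_one.mp
      ((CommGroup.mem_torsion _).mp ((QuotientGroup.eq_one_iff (u : (𝓞 K)ˣ)).mp hu))
    have hφ : φ ((u : (𝓞 K)ˣ) : K) ^ n = 1 := by
      rw [← map_pow, ← coe_pow, hun, coe_one, map_one]
    have hφu := (pow_eq_one_iff_of_nonneg (le_of_lt u.2) hn.ne').mp hφ
    exact RingOfIntegers.coe_injective (φ.injective (hφu.trans (map_one φ).symm))
  have := isCyclic_of_injective _ hinj
  obtain ⟨η, hη⟩ := IsCyclic.exists_generator (α := P)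
  refine ⟨η, fun u hu => ?_⟩
  obtain ⟨s, hs⟩ := hη ⟨u, hu⟩
  exact ⟨s, congrArg Subtype.val hs⟩

lemma exists_pow_eq_or_exists_pow_eq_pow_mul (φ : K →+* ℝ) (hK : Units.rank K ≤ 1) {l : ℕ}
    (hl : l.Prime) {x y : 𝓞 K} (hφx : 0 < φ x) (hφy : 0 < φ y)
    (hx : ∃ γ : 𝓞 K, Associated (γ ^ l) x) (hy : ∃ γ : 𝓞 K, Associated (γ ^ l) y) :
    (∃ γ : 𝓞 K, γ ^ l = x) ∨ ∃ (i : ℕ) (γ : 𝓞 K), γ ^ l = x ^ i * y := by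
  obtain ⟨η, hη⟩ := exists_forall_pos_mem_zpowers φ hK
  obtain ⟨γ, u, rfl, hu⟩ := exists_eq_pow_mul_unit_of_pos (φ.comp (algebraMap (𝓞 K) K)) hφx hx
  obtain ⟨δ, v, rfl, hv⟩ := exists_eq_pow_mul_unit_of_pos (φ.comp (algebraMap (𝓞 K) K)) hφy hy
  obtain ⟨s, rfl⟩ := hη u hu
  obtain ⟨t, rfl⟩ := hη v hv
  refine (dvd_or_exists_dvd_mul_add hl s t).imp ?_ ?_
  · rintro ⟨k, rfl⟩
    refine ⟨γ * (η ^ k : (𝓞 K)ˣ), ?_⟩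
    rw [mul_pow, ← Units.val_pow_eq_pow_val, ← zpow_natCast, ← zpow_mul, mul_comm k]
  · rintro ⟨i, k, hk⟩
    refine ⟨i, γ ^ i * δ * (η ^ k : (𝓞 K)ˣ), ?_⟩
    rw [mul_pow, mul_pow, mul_pow, ← Units.val_pow_eq_pow_val, ← Units.val_pow_eq_pow_val,
      ← zpow_natCast _ l, ← zpow_natCast _ i, ← zpow_mul, ← zpow_mul, mul_comm k, ← hk, zpow_add,
      Units.val_mul]
    ring

end Units

section Reduction

open Polynomial

lemma exists_algHom_apply_eq {F K L : Type*} [Field F] [Field K] [CommRing L] [Algebra F K]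
    [Algebra F L] {α : K} (hα : IsIntegral F α) (htop : IntermediateField.adjoin F {α} = ⊤) {x : L}
    (hx : aeval x (minpoly F α) = 0) : ∃ φ : K →ₐ[F] L, φ α = x := by
  have htop' : Algebra.adjoin F {α} = ⊤ := by
    rw [← IntermediateField.adjoin_simple_toSubalgebra_of_isAlgebraic hα.isAlgebraic, htop,
      IntermediateField.top_toSubalgebra]
  have hgen := PowerBasis.ofAdjoinEqTop_gen hα htop'
  refine ⟨(PowerBasis.ofAdjoinEqTop hα htop').lift x (by rwa [hgen]), ?_⟩
  exact (congrArg _ hgen.symm).trans (PowerBasis.lift_gen _ _ _)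

variable {p : ℕ} [Fact p.Prime]

lemma exists_padicInt_root {f : ℤ[X]} {z : ℤ} (hz : (p : ℤ) ∣ f.eval z)
    (hz' : ¬ (p : ℤ) ∣ f.derivative.eval z) :
    ∃ y : ℤ_[p], aeval y f = 0 ∧ PadicInt.toZMod y = z := by
  have aeval_intCast (g : ℤ[X]) : aeval (z : ℤ_[p]) g = (g.eval z : ℤ) := by
    simpa using aeval_algebraMap_apply ℤ_[p] z g
  have hnorm : ‖aeval (z : ℤ_[p]) f.derivative‖ = 1 :=
    (PadicInt.norm_le_one _).eq_of_not_lt fun h =>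
      hz' (PadicInt.norm_intCast_lt_one_iff.mp (aeval_intCast _ ▸ h))
  obtain ⟨y, hy, hyz, -⟩ := hensels_lemma (F := f) (a := (z : ℤ_[p])) (by
    rw [hnorm, one_pow, aeval_intCast]
    exact PadicInt.norm_intCast_lt_one_iff.mpr hz)
  refine ⟨y, hy, ?_⟩
  have hker : y - z ∈ RingHom.ker (PadicInt.toZMod (p := p)) := by
    rw [PadicInt.ker_toZMod, IsLocalRing.mem_maximalIdeal, PadicInt.mem_nonunits, ← hnorm]
    exact hyz
  rwa [RingHom.mem_ker, map_sub, sub_eq_zero, map_intCast] at hker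

variable {K : Type*} [Field K]

lemma exists_ringHom_padicInt (φ : K →+* ℚ_[p]) :
    ∃ g : 𝓞 K →+* ℤ_[p], ∀ x : 𝓞 K, (g x : ℚ_[p]) = φ x := by
  refine ⟨(φ.comp (algebraMap (𝓞 K) K)).codRestrict (PadicInt.subring p) fun x => ?_,
    fun _ => rfl⟩
  have hx : IsIntegral ℤ (φ x) := (RingOfIntegers.isIntegral_coe x).map φ.toIntAlgHom
  obtain ⟨y, hy⟩ := IsIntegrallyClosed.isIntegral_iff.mp (hx.tower_top (A := ℤ_[p]))
  exact hy ▸ y.2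

/-- Hensel's lemma turns a simple root modulo `p` into an embedding of `K` into `ℚ_[p]`. -/
lemma exists_ringHom_zmod_apply_eq [NumberField K] {α : 𝓞 K}
    (htop : IntermediateField.adjoin ℚ {(α : K)} = ⊤) {z : ℤ} (hz : (p : ℤ) ∣ (minpoly ℤ α).eval z)
    (hz' : ¬ (p : ℤ) ∣ (minpoly ℤ α).derivative.eval z) :
    ∃ ψ : 𝓞 K →+* ZMod p, ψ α = z := by
  obtain ⟨y, hy, hyz⟩ := exists_padicInt_root hz hz'
  obtain ⟨φ, hφ⟩ := exists_algHom_apply_eq (x := (y : ℚ_[p])) (Algebra.IsIntegral.isIntegral _)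
    htop (by
      rw [minpoly.isIntegrallyClosed_eq_field_fractions ℚ K (RingOfIntegers.isIntegral α),
        aeval_map_algebraMap]
      exact (aeval_algebraMap_apply ℚ_[p] y _).trans (by rw [hy, map_zero]))
  obtain ⟨g, hg⟩ := exists_ringHom_padicInt (φ : K →+* ℚ_[p])
  refine ⟨PadicInt.toZMod.comp g, ?_⟩
  rw [RingHom.comp_apply, Subtype.ext ((hg α).trans hφ), hyz]

end Reduction

section YamamotoPolynomial

open Polynomial

/-- The quadratic polynomial whose roots satisfy `α * α' = A` and `(1 - α) * (1 - α') = B`. For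
`A = a ^ m` and `B = b ^ m`, its roots generate the fields considered by Yamamoto. -/
noncomputable def yamamotoPoly (A B : ℤ) : ℤ[X] :=
  X ^ 2 - C (A - B + 1) * X + C A

/-- The discriminant of `yamamotoPoly A B`. -/
def yamamotoDisc (A B : ℤ) : ℤ :=
  (A - B + 1) ^ 2 - 4 * A

variable {A B : ℤ}

lemma monic_yamamotoPoly : (yamamotoPoly A B).Monic := by
  unfold yamamotoPoly
  monicity!

lemma natDegree_yamamotoPoly : (yamamotoPoly A B).natDegree = 2 := by
  unfold yamamotoPoly
  compute_degree!

lemma eval_derivative_yamamotoPoly (z : ℤ) :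
    (yamamotoPoly A B).derivative.eval z = 2 * z - (A - B + 1) := by
  simp [yamamotoPoly]

section CommRing

variable {R : Type*} [CommRing R]

lemma aeval_yamamotoPoly (x : R) :
    aeval x (yamamotoPoly A B) = x ^ 2 - (A - B + 1) * x + A := by
  simp [yamamotoPoly]

lemma aeval_one_sub_yamamotoPoly (x : R) :
    aeval (1 - x) (yamamotoPoly B A) = aeval x (yamamotoPoly A B) := by
  rw [aeval_yamamotoPoly, aeval_yamamotoPoly]
  ring

lemma sq_eq_yamamotoDisc {x : R} (hx : aeval x (yamamotoPoly A B) = 0) :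
    (2 * x - (A - B + 1)) ^ 2 = yamamotoDisc A B := by
  rw [aeval_yamamotoPoly] at hx
  push_cast [yamamotoDisc]
  linear_combination 4 * hx

lemma isCoprime_of_aeval_yamamotoPoly {x : R} (hx : aeval x (yamamotoPoly A B) = 0)
    (h : IsCoprime A (B - 1)) : IsCoprime x (A - B + 1 - x) := by
  obtain ⟨u, v, huv⟩ := h
  have huv' : (u : R) * A + v * (B - 1) = 1 := by exact_mod_cast congrArg (Int.cast (R := R)) huv
  rw [aeval_yamamotoPoly] at hx
  refine ⟨u * (A - B + 1 - x) - v + v * (A - B + 1 - x), -v, ?_⟩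
  linear_combination huv' - (u + v) * hx

lemma exists_associated_pow_of_aeval_yamamotoPoly [IsDedekindDomain R] {l m : ℕ} (hm : m ≠ 0)
    (hl : l ∣ m) (hcl : ∀ c : ClassGroup R, c ^ m = 1 → c ^ (m / l) = 1) {a : ℤ}
    (ha : IsCoprime a (B - 1)) {x : R} (hx0 : x ≠ 0)
    (hx : aeval x (yamamotoPoly (a ^ m) B) = 0) : ∃ γ : R, Associated (γ ^ l) x := by
  refine exists_associated_pow_of_forall_classGroup hm hl hcl hx0 (c := a) ?_
    (isCoprime_of_aeval_yamamotoPoly hx ha.pow_left)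
  rw [aeval_yamamotoPoly] at hx
  push_cast at hx ⊢
  linear_combination -hx

lemma minpoly_eq_yamamotoPoly [IsDomain R] [CharZero R] (h : ¬ IsSquare (yamamotoDisc A B)) {x : R}
    (hx : aeval x (yamamotoPoly A B) = 0) : minpoly ℤ x = yamamotoPoly A B := by
  have hirr : Irreducible (yamamotoPoly A B) := by
    rw [monic_yamamotoPoly.irreducible_iff_roots_eq_zero_of_degree_le_three
      natDegree_yamamotoPoly.ge (by rw [natDegree_yamamotoPoly]; norm_num),
      Multiset.eq_zero_iff_forall_notMem]
    intro z hz
    have hz' : aeval z (yamamotoPoly A B) = 0 := by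
      rw [coe_aeval_eq_eval]
      exact isRoot_of_mem_roots hz
    exact h ⟨_, ((sq_eq_yamamotoDisc hz').symm.trans (sq _))⟩
  have hint : IsIntegral ℤ x := ⟨_, monic_yamamotoPoly, hx⟩
  exact eq_of_monic_of_associated (minpoly.monic hint) monic_yamamotoPoly
    ((hirr.dvd_iff.mp (minpoly.isIntegrallyClosed_dvd hint hx)).resolve_left
      (minpoly.not_isUnit ℤ x)).symm

end CommRing

lemma yamamotoDisc_pos (hAB : 3 * B + 1 < A) : 0 < yamamotoDisc A B := by
  rw [yamamotoDisc]
  nlinarith [sq_nonneg (A - B - 2)]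

/-- The discriminant lies strictly between two consecutive squares. -/
lemma not_isSquare_yamamotoDisc (hB : 0 < B) (hAB : 3 * B + 1 < A) :
    ¬ IsSquare (yamamotoDisc A B) := by
  rintro ⟨x, hx⟩
  have hlo : (A - B - 2) ^ 2 < x ^ 2 := by rw [sq x, ← hx, yamamotoDisc]; linarith
  have hhi : x ^ 2 < (A - B - 1) ^ 2 := by rw [sq x, ← hx, yamamotoDisc]; linarith
  have hlo' := sq_lt_sq.mp hlo
  have hhi' := sq_lt_sq.mp hhi
  rw [abs_of_nonneg (by linarith)] at hlo'
  rw [abs_of_nonneg (by linarith : 0 ≤ A - B - 1)] at hhi'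
  linarith

lemma one_lt_of_aeval_yamamotoPoly (hB : 0 < B) (hAB : B < A) {x : ℝ}
    (hx : aeval x (yamamotoPoly A B) = 0) : 1 < x := by
  rw [aeval_yamamotoPoly] at hx
  have hB' : (0 : ℝ) < B := by exact_mod_cast hB
  have hAB' : (B : ℝ) + 1 ≤ A := by exact_mod_cast hAB
  by_contra! hx1
  nlinarith

lemma exists_real_aeval_yamamotoPoly_eq_zero (h : 0 ≤ yamamotoDisc A B) :
    ∃ x : ℝ, aeval x (yamamotoPoly A B) = 0 := by
  have hsq : √(yamamotoDisc A B : ℝ) ^ 2 = yamamotoDisc A B := Real.sq_sqrt (by exact_mod_cast h)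
  refine ⟨(A - B + 1 + √(yamamotoDisc A B)) / 2, ?_⟩
  push_cast [yamamotoDisc] at hsq ⊢
  rw [aeval_yamamotoPoly]
  linear_combination hsq / 4

variable {K : Type*} [Field K] [NumberField K]

lemma exists_integer_aeval_yamamotoPoly_eq_zero {x : K} (hx : x ^ 2 = yamamotoDisc A B) :
    ∃ α : 𝓞 K, aeval α (yamamotoPoly A B) = 0 := by
  have hroot : aeval ((A - B + 1 + x) / 2) (yamamotoPoly A B) = 0 := by
    push_cast [yamamotoDisc] at hx
    rw [aeval_yamamotoPoly]
    linear_combination hx / 4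
  have hint : IsIntegral ℤ ((A - B + 1 + x) / 2) := ⟨_, monic_yamamotoPoly, hroot⟩
  obtain ⟨α, hα⟩ := IsIntegralClosure.isIntegral_iff (A := 𝓞 K) |>.mp hint
  refine ⟨α, RingOfIntegers.coe_injective ?_⟩
  rw [← aeval_algebraMap_apply, hα, hroot, map_zero]

lemma minpoly_coe_eq_yamamotoPoly (h : ¬ IsSquare (yamamotoDisc A B)) {α : 𝓞 K}
    (hα : aeval α (yamamotoPoly A B) = 0) :
    minpoly ℚ (α : K) = (yamamotoPoly A B).map (algebraMap ℤ ℚ) := by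
  rw [minpoly.isIntegrallyClosed_eq_field_fractions ℚ K (RingOfIntegers.isIntegral α),
    minpoly_eq_yamamotoPoly h hα]

lemma adjoin_eq_top_of_aeval_yamamotoPoly (hK : Module.finrank ℚ K = 2)
    (h : ¬ IsSquare (yamamotoDisc A B)) {α : 𝓞 K} (hα : aeval α (yamamotoPoly A B) = 0) :
    IntermediateField.adjoin ℚ {(α : K)} = ⊤ := by
  rw [Field.primitive_element_iff_minpoly_natDegree_eq, hK, minpoly_coe_eq_yamamotoPoly h hα,
    monic_yamamotoPoly.natDegree_map, natDegree_yamamotoPoly]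

lemma exists_real_embedding_one_lt (hK : Module.finrank ℚ K = 2) (hB : 0 < B)
    (hAB : 3 * B + 1 < A) {α : 𝓞 K} (hα : aeval α (yamamotoPoly A B) = 0) :
    ∃ φ : K →+* ℝ, 1 < φ α := by
  have hns := not_isSquare_yamamotoDisc hB hAB
  obtain ⟨x, hx⟩ := exists_real_aeval_yamamotoPoly_eq_zero (yamamotoDisc_pos hAB).le
  obtain ⟨φ, hφ⟩ := exists_algHom_apply_eq (Algebra.IsIntegral.isIntegral (α : K))
    (adjoin_eq_top_of_aeval_yamamotoPoly hK hns hα) (x := x)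
    (by rwa [minpoly_coe_eq_yamamotoPoly hns hα, aeval_map_algebraMap])
  exact ⟨φ, (one_lt_of_aeval_yamamotoPoly hB (by linarith) hx).trans_eq hφ.symm⟩

/-- Modulo a prime factor of `A * B`, the roots of `yamamotoPoly A B` are `A` and `1 - B`. -/
lemma exists_ringHom_zmod_of_dvd_mul (hK : Module.finrank ℚ K = 2)
    (h : ¬ IsSquare (yamamotoDisc A B)) {α : 𝓞 K} (hα : aeval α (yamamotoPoly A B) = 0)
    {p : ℕ} [Fact p.Prime] (hp : (p : ℤ) ∣ A * B) (hp' : ¬ (p : ℤ) ∣ A + B - 1) {z : ℤ}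
    (hz : z = A ∨ z = 1 - B) : ∃ ψ : 𝓞 K →+* ZMod p, ψ α = z := by
  have hroot : (yamamotoPoly A B).eval z = A * B := by
    rw [← coe_aeval_eq_eval, aeval_yamamotoPoly]
    rcases hz with rfl | rfl <;> push_cast <;> ring
  apply exists_ringHom_zmod_apply_eq (adjoin_eq_top_of_aeval_yamamotoPoly hK h hα)
  · rwa [minpoly_eq_yamamotoPoly h hα, hroot]
  · rw [minpoly_eq_yamamotoPoly h hα, eval_derivative_yamamotoPoly]
    rcases hz with rfl | rfl
    · rwa [show 2 * z - (z - B + 1) = z + B - 1 by ring]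
    · rwa [show 2 * (1 - B) - (A - B + 1) = -(A + B - 1) by ring, dvd_neg]

end YamamotoPolynomial

section ClassNumber

open Polynomial

lemma IsAdmissible.ne_zero {m : ℕ} {a b : ℤ} (h : IsAdmissible m a b) : m ≠ 0 := by
  rintro rfl
  simpa using h.lt

lemma isPowResidue_of_pow_pow_mul {l m r : ℕ} [Fact r.Prime] (hl : l ∣ m) {a : ℤ}
    (ha : ¬ (r : ℤ) ∣ a) {i : ℕ} {x : ℤ} (h : IsPowResidue l r ((a ^ m) ^ i * x)) :
    IsPowResidue l r x := by
  obtain ⟨k, rfl⟩ := hl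
  obtain ⟨y, hy⟩ := h
  have ha' : (a : ZMod r) ≠ 0 := fun h => ha ((ZMod.intCast_zmod_eq_zero_iff_dvd a r).mp h)
  refine ⟨y / (a ^ k) ^ i, ?_⟩
  push_cast at hy
  rw [div_pow, hy, div_eq_iff (pow_ne_zero _ (pow_ne_zero _ (pow_ne_zero _ ha')))]
  ring

lemma not_dvd_add_of_isCoprime {p : ℕ} (hp : p.Prime) {x y : ℤ} (hx : (p : ℤ) ∣ x) {n : ℕ}
    (hn : n ≠ 0) (h : IsCoprime x y) : ¬ (p : ℤ) ∣ x ^ n + y := fun hxy =>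
  (Nat.prime_iff_prime_int.mp hp).not_isUnit
    (h.isUnit_of_dvd' hx ((dvd_add_right (dvd_pow hx hn)).mp hxy))

variable {K : Type*} [Field K] [NumberField K]

lemma rank_le_one_of_finrank_eq_two (hK : Module.finrank ℚ K = 2) : Units.rank K ≤ 1 := by
  have hcard := InfinitePlace.card_eq_nrRealPlaces_add_nrComplexPlaces K
  have hrank := InfinitePlace.card_add_two_mul_card_eq_rank K
  rw [Units.rank]
  omega

variable {m : ℕ} {a b : ℤ} {α : 𝓞 K}

lemma IsAdmissible.pow_ne (h : IsAdmissible m a b) (hK : Module.finrank ℚ K = 2)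
    (hα : aeval α (yamamotoPoly (a ^ m) (b ^ m)) = 0) {l : ℕ} (hl : l.Prime) (hlm : l ∣ m)
    (γ : 𝓞 K) : γ ^ l ≠ α := by
  rintro rfl
  obtain ⟨q, hq, hqa, hres⟩ := h.exists_left l hl hlm
  have := Fact.mk hq
  obtain ⟨ψ, hψ⟩ := exists_ringHom_zmod_of_dvd_mul hK
    (not_isSquare_yamamotoDisc (pow_pos h.pos m) h.lt) hα
    ((dvd_pow hqa h.ne_zero).mul_right _)
    (add_sub_assoc (a ^ m) _ _ ▸ not_dvd_add_of_isCoprime hq hqa h.ne_zero h.isCoprime_left)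
    (Or.inr rfl)
  exact hres ⟨ψ γ, by rw [← map_pow, hψ]⟩

lemma IsAdmissible.pow_ne_pow_mul (h : IsAdmissible m a b) (hK : Module.finrank ℚ K = 2)
    (hα : aeval α (yamamotoPoly (a ^ m) (b ^ m)) = 0) {l : ℕ} (hl : l.Prime) (hlm : l ∣ m)
    (i : ℕ) (γ : 𝓞 K) : γ ^ l ≠ α ^ i * (α - 1) := by
  intro hγ
  obtain ⟨r, hr, hrb, hra, hres⟩ := h.exists_right l hl hlm
  have := Fact.mk hr
  obtain ⟨ψ, hψ⟩ := exists_ringHom_zmod_of_dvd_mul hK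
    (not_isSquare_yamamotoDisc (pow_pos h.pos m) h.lt) hα
    ((dvd_pow hrb h.ne_zero).mul_left _)
    (by
      rw [add_comm (a ^ m), add_sub_assoc]
      exact not_dvd_add_of_isCoprime hr hrb h.ne_zero h.isCoprime_right)
    (Or.inl rfl)
  refine hres (isPowResidue_of_pow_pow_mul hlm hra (i := i) ⟨ψ γ, ?_⟩)
  rw [← map_pow, hγ, map_mul, map_pow, map_sub, hψ, map_one]
  push_cast
  rfl

theorem IsAdmissible.dvd_card_classGroup (h : IsAdmissible m a b) (hK : Module.finrank ℚ K = 2)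
    (hα : aeval α (yamamotoPoly (a ^ m) (b ^ m)) = 0) : m ∣ Nat.card (ClassGroup (𝓞 K)) := by
  by_contra hm
  obtain ⟨l, hl, hlm, hcl⟩ := exists_prime_dvd_forall_pow_div_eq_one hm
  obtain ⟨φ, hφ⟩ := exists_real_embedding_one_lt hK (pow_pos h.pos m) h.lt hα
  have hφα : 0 < φ α := one_pos.trans hφ
  have hφα' : 0 < φ (α - 1 : 𝓞 K) := by simpa using hφ
  have hα0 : α ≠ 0 := by rintro rfl; simp at hφα
  have hα1 : 1 - α ≠ 0 := fun h0 => by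
    rw [← neg_sub, neg_eq_zero] at h0
    simp [h0] at hφα'
  have hx : ∃ γ : 𝓞 K, Associated (γ ^ l) α :=
    exists_associated_pow_of_aeval_yamamotoPoly h.ne_zero hlm hcl h.isCoprime_left hα0 hα
  obtain ⟨δ, hδ⟩ : ∃ δ : 𝓞 K, Associated (δ ^ l) (1 - α) :=
    exists_associated_pow_of_aeval_yamamotoPoly h.ne_zero hlm hcl h.isCoprime_right hα1
      ((aeval_one_sub_yamamotoPoly α).trans hα)
  have hy : ∃ δ : 𝓞 K, Associated (δ ^ l) (α - 1) := ⟨δ, neg_sub 1 α ▸ hδ.neg_right⟩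
  obtain ⟨γ, hγ⟩ | ⟨i, γ, hγ⟩ := exists_pow_eq_or_exists_pow_eq_pow_mul φ
    (rank_le_one_of_finrank_eq_two hK) hl hφα hφα' hx hy
  · exact h.pow_ne hK hα hl hlm γ hγ
  · exact h.pow_ne_pow_mul hK hα hl hlm i γ hγ

end ClassNumber

section Infinitude

/-- The squarefree `d > 1` such that `m` divides the class number of `ℚ(√d)`, for every model of
this field. -/
def realQuadClassNumberDvd (m : ℕ) : Set ℤ :=
  {d : ℤ | 1 < d ∧ Squarefree d ∧
      ∀ (K : Type) [Field K] [NumberField K],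
        (∃ x : K, x * x = (d : K)) → Module.finrank ℚ K = 2 →
          m ∣ Nat.card (ClassGroup (𝓞 K))}

lemma exists_squarefree_mul_sq {n : ℤ} (hn : 0 < n) (hns : ¬ IsSquare n) :
    ∃ d f : ℤ, 1 < d ∧ Squarefree d ∧ f ^ 2 * d = n := by
  lift n to ℕ using hn.le
  obtain ⟨d, f, rfl, hd⟩ := Nat.sq_mul_squarefree n
  refine ⟨d, f, ?_, Int.squarefree_natCast.mpr hd, by push_cast; rfl⟩
  have hd1 : d ≠ 1 := by
    rintro rfl
    exact hns ⟨f, by push_cast; ring⟩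
  exact_mod_cast Nat.one_lt_iff_ne_zero_and_ne_one.mpr ⟨hd.ne_zero, hd1⟩

lemma not_isSquare_of_squarefree {d : ℤ} (hd : 1 < d) (hsq : Squarefree d) : ¬ IsSquare d := by
  rintro ⟨x, rfl⟩
  rcases Int.isUnit_iff.mp (hsq x dvd_rfl) with rfl | rfl <;> norm_num at hd

theorem realQuadClassNumberDvd_nonempty {m : ℕ} (hm : m ≠ 0) :
    (realQuadClassNumberDvd m).Nonempty := by
  obtain ⟨a, b, h⟩ := exists_isAdmissible hm
  obtain ⟨d, f, hd, hsq, hdf⟩ := exists_squarefree_mul_sq (yamamotoDisc_pos h.lt)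
    (not_isSquare_yamamotoDisc (pow_pos h.pos m) h.lt)
  refine ⟨d, hd, hsq, fun K _ _ ⟨x, hx⟩ hK => ?_⟩
  obtain ⟨α, hα⟩ := exists_integer_aeval_yamamotoPoly_eq_zero (K := K) (x := f * x)
    (by rw [mul_pow, sq x, hx, ← hdf]; push_cast; rfl)
  exact h.dvd_card_classGroup hK hα

lemma realQuadClassNumberDvd_subset {m n : ℕ} (h : m ∣ n) :
    realQuadClassNumberDvd n ⊆ realQuadClassNumberDvd m := fun _ ⟨hd, hsq, hn⟩ =>
  ⟨hd, hsq, fun K _ _ hx hK => h.trans (hn K hx hK)⟩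

lemma exists_numberField_finrank_eq_two {d : ℤ} (hd : ¬ IsSquare d) :
    ∃ (K : Type) (_ : Field K) (_ : NumberField K),
      (∃ x : K, x * x = (d : K)) ∧ Module.finrank ℚ K = 2 := by
  have : Fact (∀ r : ℚ, r ^ 2 ≠ d + 0 * r) := ⟨fun r hr =>
    hd (Rat.isSquare_intCast_iff.mp ⟨r, by linear_combination -hr⟩)⟩
  have : NumberField (QuadraticAlgebra ℚ d 0) := @NumberField.mk _ _ inferInstance (by
    convert (inferInstance : Module.Finite ℚ (QuadraticAlgebra ℚ (d : ℚ) 0)))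
  refine ⟨QuadraticAlgebra ℚ d 0, inferInstance, this, ⟨QuadraticAlgebra.omega, ?_⟩, ?_⟩
  · simp [QuadraticAlgebra.omega_mul_omega_eq_mk, QuadraticAlgebra.ext_iff]
  · convert QuadraticAlgebra.finrank_eq_two (d : ℚ) 0

lemma exists_forall_mem_realQuadClassNumberDvd_le (d : ℤ) :
    ∃ H : ℕ, ∀ n : ℕ, d ∈ realQuadClassNumberDvd n → n ≤ H := by
  by_cases hd : 1 < d ∧ Squarefree d
  · obtain ⟨K, _, _, hx, hK⟩ :=
      exists_numberField_finrank_eq_two (not_isSquare_of_squarefree hd.1 hd.2)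
    exact ⟨Nat.card (ClassGroup (𝓞 K)), fun n hn =>
      Nat.le_of_dvd Nat.card_pos (hn.2.2 K hx hK)⟩
  · exact ⟨0, fun n hn => absurd ⟨hn.1, hn.2.1⟩ hd⟩

end Infinitude

/-- Yamamoto, Weinberger: for every integer `m > 1`, there are infinitely many real
quadratic fields whose class number is divisible by `m`; i.e. the set of squarefree
integers `d > 1` such that `m` divides the class number of `ℚ(√d)` (characterized as a
degree-2 number field containing a square root of `d`) is infinite. -/
theorem infinitely_many_real_quad_class_number_divisible (m : ℕ) (hm : 1 < m) :
    {d : ℤ | 1 < d ∧ Squarefree d ∧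
      ∀ (K : Type) [Field K] [NumberField K],
        (∃ x : K, x * x = (d : K)) → Module.finrank ℚ K = 2 →
          m ∣ Nat.card (ClassGroup (𝓞 K))}.Infinite := by
  change (realQuadClassNumberDvd m).Infinite
  choose H hH using exists_forall_mem_realQuadClassNumberDvd_le
  intro hfin
  obtain ⟨N, hN⟩ := (hfin.image H).bddAbove
  obtain ⟨d, hd⟩ := realQuadClassNumberDvd_nonempty (m := m * (N + 1)) (by positivity)
  have hdN : H d ≤ N := hN ⟨d, realQuadClassNumberDvd_subset (dvd_mul_right m _) hd, rfl⟩
  have hdH : m * (N + 1) ≤ H d := hH d _ hd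
  nlinarith
end

section
/- Let (t,u,z) ∈ ℚ³ satisfy (2t−1)⁵(4t²−2t−1)z² = (2u−1)⁵(4u²−2u−1), with a(t,u,z) ≠ 0 and t,u ∉ {0, 1/2, 1}. Then the polynomial a·(a₆X⁶ + a₄X⁴ + a₂X² + a₀) ∈ ℚ[X] (with a, a₀, a₂, a₄, a₆ evaluated at (t,u,z) as in the context) has degree 6 and is separable (squarefree); in particular the equation y² = a(a₆x⁶ + a₄x⁴ + a₂x² + a₀) defines a smooth projective curve of genus 2 over ℚ. -/
open Polynomial

/-!
The parameter `t` stands for the elliptic curve `E_t : 2y² = x((x - p)² - q)` with a rational point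
of order 10, where `p = torsionCenter t` and `q = torsionRadicand t`. The hypothesis
`q(t) z² = q(u)` says that the 2-torsion of `E_t`, with abscissae `0, p(t) ± √q(t)`, is matched with
that of `E_u`, with abscissae `0, p(u) ± z√q(t)`, and the sextic is the one for which the squares
`x²` of the Weierstrass points are the ratios of corresponding differences of abscissae.
Hence, up to the factor `a`, it is `g(X²)` with `g = w(v² - q(t)w²)`, where `w = zX - 1` and
`v = p(u)X - p(t)`. The cubic `g` is separable because the linear forms `v` and `w` are not
proportional, which is what `a ≠ 0` means, and `g(X²)` is separable because `g(0) ≠ 0`. The constant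
and leading coefficients of `g` are `q(t) - p(t)²` and `z(p(u)² - q(u))`, and the quadratic factors
of `q` and of `p² - q` have no roots because 5 is not a square.
-/

section Separable

variable {R : Type*} [CommRing R]

theorem isCoprime_of_isUnit_linear_combination {x y : R} (α β : R)
    (h : IsUnit (α * x + β * y)) : IsCoprime x y := by
  obtain ⟨c, hc⟩ := h.exists_right_inv
  exact ⟨c * α, c * β, by linear_combination hc⟩

theorem isCoprime_X_of_isUnit_coeff_zero {f : R[X]} (hf : IsUnit (f.coeff 0)) :
    IsCoprime f X := by
  refine isCoprime_of_isUnit_linear_combination 1 (-divX f) ?_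
  have hcoeff : 1 * f + -divX f * X = C (f.coeff 0) := by
    linear_combination -divX_mul_X_add f
  rw [hcoeff]
  exact hf.map C

theorem separable_expand {f : R[X]} (hf : f.Separable) {n : ℕ} (hn : IsUnit (n : R))
    (hf₀ : IsUnit (f.coeff 0)) : (expand R n f).Separable := by
  have hX : IsCoprime (expand R n f) (X ^ (n - 1)) := by
    have := (isCoprime_X_of_isUnit_coeff_zero hf₀).map (expand R n : R[X] →+* R[X])
    refine this.of_isCoprime_of_dvd_right ?_
    simpa using pow_dvd_pow X (Nat.sub_le n 1)
  have hn' : IsUnit (n : R[X]) := by simpa using hn.map (C : R →+* R[X])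
  rw [separable_def, derivative_expand]
  exact (IsCoprime.map hf (expand R n : R[X] →+* R[X])).mul_right
    ((isCoprime_mul_unit_left_right hn' _ _).mpr hX)

theorem separable_right_of_isUnit_wronskian {v w : R[X]} (hW : IsUnit (wronskian v w)) :
    w.Separable := by
  refine isCoprime_of_isUnit_linear_combination (-derivative v) v ?_
  convert hW using 1
  rw [wronskian]
  ring

theorem isCoprime_of_isUnit_wronskian {v w : R[X]} (hW : IsUnit (wronskian v w)) :
    IsCoprime v w := by
  refine isCoprime_of_isUnit_linear_combination (derivative w) (-derivative v) ?_
  convert hW using 1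
  rw [wronskian]
  ring

/-- For linear `v` and `w` this is the identity `disc f = f'² - 4αf` of the quadratic
`f = v² - dw² = αX² + βX + γ`. -/
theorem four_mul_C_mul_wronskian_sq (v w : R[X]) (d : R) :
    4 * C d * wronskian v w ^ 2 =
      4 * (C d * derivative w ^ 2 - derivative v ^ 2) * (v ^ 2 - C d * w ^ 2) +
        derivative (v ^ 2 - C d * w ^ 2) * derivative (v ^ 2 - C d * w ^ 2) := by
  rw [wronskian, derivative_sub, derivative_C_mul, derivative_sq, derivative_sq]
  simp only [map_ofNat]
  ring

theorem separable_sq_sub_C_mul_sq {v w : R[X]} {d : R} (h2 : IsUnit (2 : R)) (hd : IsUnit d)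
    (hW : IsUnit (wronskian v w)) : (v ^ 2 - C d * w ^ 2).Separable := by
  have h4 : IsUnit (4 : R[X]) := by
    convert (h2.map (C : R →+* R[X])).pow 2 using 1
    rw [map_ofNat]
    norm_num
  refine isCoprime_of_isUnit_linear_combination
    (4 * (C d * derivative w ^ 2 - derivative v ^ 2)) (derivative (v ^ 2 - C d * w ^ 2)) ?_
  rw [← four_mul_C_mul_wronskian_sq]
  exact (h4.mul (hd.map C)).mul (hW.pow 2)

theorem separable_mul_sq_sub_C_mul_sq {v w : R[X]} {d : R} (h2 : IsUnit (2 : R)) (hd : IsUnit d)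
    (hW : IsUnit (wronskian v w)) : (w * (v ^ 2 - C d * w ^ 2)).Separable := by
  refine (separable_right_of_isUnit_wronskian hW).mul (separable_sq_sub_C_mul_sq h2 hd hW) ?_
  have hv : IsCoprime w (v ^ 2) := (isCoprime_of_isUnit_wronskian hW).symm.pow_right
  rw [show v ^ 2 - C d * w ^ 2 = v ^ 2 + w * -(C d * w) by ring]
  exact hv.add_mul_left_right _

end Separable

section GluingCubic

variable {R : Type*} [CommRing R]

/-- The cubic whose roots are the ratios `1 / z` and `(p ± √d) / (p' ± z√d)` of corresponding
differences of the triples `0, p ± √d` and `0, p' ± z√d`, written without divisions. Substituting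
`X²` gives the sextic of the genus 2 curve that glues two elliptic curves with these 2-torsion
abscissae. -/
noncomputable def gluingCubic (z p p' d : R) : R[X] :=
  (C z * X - 1) * ((C p' * X - C p) ^ 2 - C d * (C z * X - 1) ^ 2)

theorem wronskian_C_mul_X_sub_C_C_mul_X_sub_one (z p p' : R) :
    wronskian (C p' * X - C p) (C z * X - 1) = C (p' - z * p) := by
  simp only [wronskian, derivative_sub, derivative_C_mul_X, derivative_C, derivative_one, C_sub,
    C_mul]
  ring

theorem gluingCubic_separable {z p p' d : R} (h2 : IsUnit (2 : R)) (hd : IsUnit d)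
    (h : IsUnit (p' - z * p)) : (gluingCubic z p p' d).Separable :=
  separable_mul_sq_sub_C_mul_sq h2 hd <| by
    simpa only [wronskian_C_mul_X_sub_C_C_mul_X_sub_one] using h.map C

theorem coeff_zero_gluingCubic (z p p' d : R) :
    (gluingCubic z p p' d).coeff 0 = d - p ^ 2 := by
  simp [gluingCubic, coeff_zero_eq_eval_zero]

theorem expand_two_gluingCubic (z p p' d : R) :
    expand R 2 (gluingCubic z p p' d) =
      C (z * (p' ^ 2 - d * z ^ 2)) * X ^ 6 +
        C (3 * d * z ^ 2 - 2 * p * p' * z - p' ^ 2) * X ^ 4 +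
        C (p ^ 2 * z + 2 * p * p' - 3 * d * z) * X ^ 2 + C (d - p ^ 2) := by
  simp only [gluingCubic, map_mul, map_sub, map_add, map_pow, map_one, map_ofNat, expand_C,
    expand_X]
  ring

end GluingCubic

section Torsion

/-- The midpoint `p(t)` of the nonzero 2-torsion abscissae `p(t) ± √q(t)` of the elliptic curve
`E_t` with a point of order 10; see `torsionRadicand` for `q(t)`. -/
def torsionCenter {R : Type*} [CommRing R] (t : R) : R :=
  8 * t ^ 6 - 32 * t ^ 5 + 40 * t ^ 4 - 20 * t ^ 3 + 4 * t - 1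

/-- The number `q(t)` in the nonzero 2-torsion abscissae `p(t) ± √q(t)` of the elliptic curve `E_t`
with a point of order 10; its square class determines the field of definition of the 2-torsion. -/
def torsionRadicand {R : Type*} [CommRing R] (t : R) : R :=
  (2 * t - 1) ^ 5 * (4 * t ^ 2 - 2 * t - 1)

theorem torsionCenter_sq_sub_torsionRadicand {R : Type*} [CommRing R] (t : R) :
    torsionCenter t ^ 2 - torsionRadicand t =
      64 * t ^ 5 * (t - 1) ^ 5 * (t ^ 2 - 3 * t + 1) := by
  rw [torsionCenter, torsionRadicand]
  ring

variable {K : Type*} [Field K]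

theorem two_ne_zero_of_not_isSquare_five (h5 : ¬IsSquare (5 : K)) : (2 : K) ≠ 0 :=
  fun h2 ↦ h5 ⟨1, by linear_combination 2 * h2⟩

theorem torsionRadicand_ne_zero (h5 : ¬IsSquare (5 : K)) {t : K} (ht : t ≠ 1 / 2) :
    torsionRadicand t ≠ 0 := by
  have h2 := two_ne_zero_of_not_isSquare_five h5
  have hlin : 2 * t - 1 ≠ 0 := fun h ↦ ht (by rw [eq_div_iff h2]; linear_combination h)
  have hquad : 4 * t ^ 2 - 2 * t - 1 ≠ 0 :=
    fun h ↦ h5 ⟨4 * t - 1, by linear_combination -4 * h⟩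
  exact mul_ne_zero (pow_ne_zero 5 hlin) hquad

theorem torsionCenter_sq_sub_torsionRadicand_ne_zero (h5 : ¬IsSquare (5 : K)) {t : K}
    (ht₀ : t ≠ 0) (ht₁ : t ≠ 1) : torsionCenter t ^ 2 - torsionRadicand t ≠ 0 := by
  have h64 : (64 : K) ≠ 0 := by
    rw [show (64 : K) = 2 ^ 6 by norm_num]
    exact pow_ne_zero 6 (two_ne_zero_of_not_isSquare_five h5)
  have hquad : t ^ 2 - 3 * t + 1 ≠ 0 := fun h ↦ h5 ⟨2 * t - 3, by linear_combination -4 * h⟩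
  rw [torsionCenter_sq_sub_torsionRadicand]
  exact mul_ne_zero (mul_ne_zero (mul_ne_zero h64 (pow_ne_zero 5 ht₀))
    (pow_ne_zero 5 (sub_ne_zero.mpr ht₁))) hquad

end Torsion

theorem sextic_degree_six_and_separable_general {K : Type*} [Field K] (h5 : ¬IsSquare (5 : K))
    {t u z a a0 a2 a4 a6 : K} (hrel : torsionRadicand t * z ^ 2 = torsionRadicand u)
    (ht0 : t ≠ 0) (ht1 : t ≠ 1) (hu0 : u ≠ 0) (huhalf : u ≠ 1 / 2) (hu1 : u ≠ 1)
    (ha : a = 2 * (z * torsionCenter t - torsionCenter u))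
    (ha0 : a0 = torsionRadicand t - torsionCenter t ^ 2)
    (ha2 : a2 = torsionCenter t ^ 2 * z + 2 * torsionCenter t * torsionCenter u -
      3 * torsionRadicand t * z)
    (ha4 : a4 = 3 * torsionRadicand t * z ^ 2 - 2 * torsionCenter t * torsionCenter u * z -
      torsionCenter u ^ 2)
    (ha6 : a6 = z * (torsionCenter u ^ 2 - torsionRadicand t * z ^ 2)) (hane : a ≠ 0) :
    (C (a * a6) * X ^ 6 + C (a * a4) * X ^ 4 + C (a * a2) * X ^ 2 + C (a * a0)).natDegree = 6 ∧
    (C (a * a6) * X ^ 6 + C (a * a4) * X ^ 4 + C (a * a2) * X ^ 2 + C (a * a0)).Separable := by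
  have h2 : (2 : K) ≠ 0 := two_ne_zero_of_not_isSquare_five h5
  have hq_z : torsionRadicand t * z ^ 2 ≠ 0 := hrel ▸ torsionRadicand_ne_zero h5 huhalf
  have hq : torsionRadicand t ≠ 0 := left_ne_zero_of_mul hq_z
  have hz : z ≠ 0 := ne_zero_pow two_ne_zero (right_ne_zero_of_mul hq_z)
  have hlead : a * a6 ≠ 0 := by
    rw [ha6, hrel]
    exact mul_ne_zero hane
      (mul_ne_zero hz (torsionCenter_sq_sub_torsionRadicand_ne_zero h5 hu0 hu1))
  have hindep : torsionCenter u - z * torsionCenter t ≠ 0 :=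
    fun h ↦ hane (by linear_combination ha - 2 * h)
  have hconst : (gluingCubic z (torsionCenter t) (torsionCenter u) (torsionRadicand t)).coeff 0
      ≠ 0 := by
    rw [coeff_zero_gluingCubic, ← neg_sub]
    exact neg_ne_zero.mpr (torsionCenter_sq_sub_torsionRadicand_ne_zero h5 ht0 ht1)
  have hsextic : C (a * a6) * X ^ 6 + C (a * a4) * X ^ 4 + C (a * a2) * X ^ 2 + C (a * a0) =
      C a * expand K 2
        (gluingCubic z (torsionCenter t) (torsionCenter u) (torsionRadicand t)) := by
    rw [expand_two_gluingCubic, ← ha0, ← ha2, ← ha4, ← ha6]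
    simp only [C_mul]
    ring
  constructor
  · compute_degree!
    exact mul_ne_zero_iff.mp hlead
  · rw [hsextic]
    exact (separable_expand (gluingCubic_separable h2.isUnit hq.isUnit hindep.isUnit)
      (by exact_mod_cast h2.isUnit) hconst.isUnit).unit_mul (isUnit_C.mpr hane.isUnit)

set_option maxHeartbeats 1000000 in
/-- Given a solution `(t,u,z)` of `(2t−1)⁵(4t²−2t−1)z² = (2u−1)⁵(4u²−2u−1)` with
`a ≠ 0` and `t, u ∉ {0, 1/2, 1}`, the sextic polynomial
`a(a₆X⁶ + a₄X⁴ + a₂X² + a₀) ∈ ℚ[X]` has degree 6 and is separable, so that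
`y² = a(a₆x⁶ + a₄x⁴ + a₂x² + a₀)` defines a smooth projective genus 2 curve over `ℚ`. -/
theorem sextic_degree_six_and_separable (t u z : ℚ)
    (hrel : (2*t - 1)^5 * (4*t^2 - 2*t - 1) * z^2 = (2*u - 1)^5 * (4*u^2 - 2*u - 1))
    (ht0 : t ≠ 0) (hthalf : t ≠ 1/2) (ht1 : t ≠ 1)
    (hu0 : u ≠ 0) (huhalf : u ≠ 1/2) (hu1 : u ≠ 1)
    (a a0 a2 a4 a6 : ℚ)
    (ha : a = 2*(8*t^6*z - 32*t^5*z + 40*t^4*z - 20*t^3*z + 4*t*z - 8*u^6 + 32*u^5 - 40*u^4 + 20*u^3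
      - 4*u - z + 1))
    (ha0 : a0 = -64*t^5*(t - 1)^5*(t^2 - 3*t + 1))
    (ha2 : a2 = 2*(32*t^12*z - 256*t^11*z + 832*t^10*z - 1440*t^9*z + 1440*t^8*z - 960*t^7*z +
      64*t^6*u^6 - 256*t^6*u^5 + 320*t^6*u^4 - 160*t^6*u^3 + 32*t^6*u + 640*t^6*z -
      8*t^6 - 256*t^5*u^6 + 1024*t^5*u^5 - 1280*t^5*u^4 + 640*t^5*u^3 - 128*t^5*u -
      480*t^5*z + 32*t^5 + 320*t^4*u^6 - 1280*t^4*u^5 + 1600*t^4*u^4 - 800*t^4*u^3 +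
      160*t^4*u + 240*t^4*z - 40*t^4 - 160*t^3*u^6 + 640*t^3*u^5 - 800*t^3*u^4 +
      400*t^3*u^3 - 80*t^3*u - 40*t^3*z + 20*t^3 - 16*t^2*z + 32*t*u^6 - 128*t*u^5 +
      160*t*u^4 - 80*t*u^3 + 16*t*u + 8*t*z - 4*t - 8*u^6 + 32*u^5 - 40*u^4 + 20*u^3 -
      4*u - z + 1))
    (ha4 : a4 = 384*t^7*z^2 - 128*t^6*u^6*z + 512*t^6*u^5*z - 640*t^6*u^4*z + 320*t^6*u^3*z -
      64*t^6*u*z - 1152*t^6*z^2 + 16*t^6*z + 512*t^5*u^6*z - 2048*t^5*u^5*z +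
      2560*t^5*u^4*z - 1280*t^5*u^3*z + 256*t^5*u*z + 1344*t^5*z^2 - 64*t^5*z -
      640*t^4*u^6*z + 2560*t^4*u^5*z - 3200*t^4*u^4*z + 1600*t^4*u^3*z - 320*t^4*u*z -
      720*t^4*z^2 + 80*t^4*z + 320*t^3*u^6*z - 1280*t^3*u^5*z + 1600*t^3*u^4*z -
      800*t^3*u^3*z + 160*t^3*u*z + 120*t^3*z^2 - 40*t^3*z + 48*t^2*z^2 - 64*t*u^6*z +
      256*t*u^5*z - 320*t*u^4*z + 160*t*u^3*z - 32*t*u*z - 24*t*z^2 + 8*t*z - 64*u^12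
      + 512*u^11 - 1664*u^10 + 2880*u^9 - 2880*u^8 + 1536*u^7 + 16*u^6*z - 128*u^6 -
      64*u^5*z - 384*u^5 + 80*u^4*z + 240*u^4 - 40*u^3*z - 40*u^3 - 16*u^2 + 8*u*z +
      8*u + 3*z^2 - 2*z - 1)
    (ha6 : a6 = z*(-128*t^7*z^2 + 384*t^6*z^2 - 448*t^5*z^2 + 240*t^4*z^2 - 40*t^3*z^2 - 16*t^2*z^2 +
      8*t*z^2 + 64*u^12 - 512*u^11 + 1664*u^10 - 2880*u^9 + 2880*u^8 - 1536*u^7 +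
      128*u^6 + 384*u^5 - 240*u^4 + 40*u^3 + 16*u^2 - 8*u - z^2 + 1))
    (hane : a ≠ 0) :
    (C (a * a6) * X^6 + C (a * a4) * X^4 + C (a * a2) * X^2 + C (a * a0)).natDegree = 6 ∧
    (C (a * a6) * X^6 + C (a * a4) * X^4 + C (a * a2) * X^2 + C (a * a0)).Separable := by
  have h5 : ¬IsSquare (5 : ℚ) := by
    exact_mod_cast Rat.isSquare_natCast_iff.not.mpr Nat.prime_five.prime.not_isSquare
  apply sextic_degree_six_and_separable_general h5 hrel ht0 ht1 hu0 huhalf hu1 _ _ _ _ _ hane <;>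
    simp only [ha, ha0, ha2, ha4, ha6, torsionCenter, torsionRadicand] <;> ring
end
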